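/- Let n ≥ 2 be an integer and let ψ : [0,∞) → [0,∞) be an absolutely continuous decreasing function with ψ(0) = 1 and −1 ≤ ψ'(s) ≤ 0 for almost every s. Suppose A = ∫_0^∞ s^{n−1} ψ(s) ds and B = ∫_0^∞ s^{n+1} ψ(s) ds are both finite, and let a ≥ 0 be a real number satisfying ((a+1)^{n+1} − a^{n+1})/(n+1) = n·A. Then B ≥ (1/n)·(nA)^{(n+2)/n} + S_{n+3}/((n+2)(n+3)) − (nA)^{2/n}·S_{n+1}/(n(n+1)). -/

import Mathlib

open MeasureTheory

/-!
Let `φ` be equal to `1` on `[0, a]`, decrease with slope `-1` on `[a, a + 1]` and vanish afterwards.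
Since `0 ≤ ψ ≤ 1` and `s + ψ s` is monotone, the difference `ψ - φ` changes sign at most once, from
negative to positive, at some `c ≥ 0`. Hence `s ^ (n - 1) * (s ^ 2 - c ^ 2) * (ψ s - φ s) ≥ 0`. The
choice of `a` makes the moments of order `n - 1` of `ψ` and `φ` equal, so integrating shows that `B`
is at least the moment of order `n + 1` of `φ`, which is `S_{n+3} / ((n+2)(n+3))`, where
`S_j = (a+1)^j - a^j`. The other two terms of the bound cancel, because `S_{n+1} / (n+1) = n * A`.
-/

theorem exists_sign_change {α β : Type*} [ConditionallyCompleteLinearOrder α] [LinearOrder β]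
    [Zero β] {f : α → β} {l b : α}
    (hf : ∀ x y, l ≤ x → x ≤ y → 0 < f x → 0 ≤ f y) (hb : ∀ x, b ≤ x → 0 ≤ f x) :
    ∃ c, l ≤ c ∧ (∀ x, l ≤ x → x < c → f x ≤ 0) ∧ ∀ x, c < x → 0 ≤ f x := by
  let P : Set α := {x | l ≤ x ∧ ∀ y, x ≤ y → 0 ≤ f y}
  have hP : P.Nonempty := ⟨max l b, le_max_left l b, fun y hy => hb y ((le_max_right l b).trans hy)⟩
  have hPl : l ∈ lowerBounds P := fun x hx => hx.1
  refine ⟨sInf P, le_csInf hP hPl, fun x hlx hx => ?_, fun x hx => ?_⟩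
  · by_contra! hfx
    exact notMem_of_lt_csInf hx ⟨l, hPl⟩ ⟨hlx, fun y hxy => hf x y hlx hxy hfx⟩
  · obtain ⟨p, hp, hpx⟩ := exists_lt_of_csInf_lt hP hx
    exact hp.2 x hpx.le

theorem mul_setIntegral_Ioi_le_of_sign_change {α : Type*} [LinearOrder α] [TopologicalSpace α]
    [OrderClosedTopology α] [MeasurableSpace α] [OpensMeasurableSpace α] {μ : Measure α}
    {f g : α → ℝ} {l c : α}
    (hlc : l ≤ c) (hneg : ∀ x, l ≤ x → x < c → f x ≤ 0) (hpos : ∀ x, c < x → 0 ≤ f x)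
    (hg : MonotoneOn g (Set.Ici l)) (hf : IntegrableOn f (Set.Ioi l) μ)
    (hgf : IntegrableOn (fun x => g x * f x) (Set.Ioi l) μ) :
    g c * ∫ x in Set.Ioi l, f x ∂μ ≤ ∫ x in Set.Ioi l, g x * f x ∂μ := by
  rw [← integral_const_mul]
  refine setIntegral_mono_on (hf.const_mul _) hgf measurableSet_Ioi fun x hx => ?_
  have hlx : l ≤ x := le_of_lt hx
  rcases lt_trichotomy x c with hxc | rfl | hcx
  · exact mul_le_mul_of_nonpos_right (hg hlx hlc hxc.le) (hneg x hlx hxc)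
  · rfl
  · exact mul_le_mul_of_nonneg_right (hg hlc hlx hcx.le) (hpos x hcx)

theorem pow_mul_sub_integral_le_of_sign_change {φ ψ : ℝ → ℝ} {c : ℝ} {k m : ℕ} {μ : Measure ℝ}
    (hc : 0 ≤ c) (hneg : ∀ s, 0 ≤ s → s < c → ψ s - φ s ≤ 0) (hpos : ∀ s, c < s → 0 ≤ ψ s - φ s)
    (hψk : IntegrableOn (fun s => s ^ k * ψ s) (Set.Ioi 0) μ)
    (hφk : IntegrableOn (fun s => s ^ k * φ s) (Set.Ioi 0) μ)
    (hψkm : IntegrableOn (fun s => s ^ (k + m) * ψ s) (Set.Ioi 0) μ)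
    (hφkm : IntegrableOn (fun s => s ^ (k + m) * φ s) (Set.Ioi 0) μ) :
    c ^ m * (∫ s in Set.Ioi 0, s ^ k * ψ s ∂μ - ∫ s in Set.Ioi 0, s ^ k * φ s ∂μ)
      ≤ ∫ s in Set.Ioi 0, s ^ (k + m) * ψ s ∂μ - ∫ s in Set.Ioi 0, s ^ (k + m) * φ s ∂μ := by
  have hpow (s y : ℝ) : s ^ (k + m) * y = s ^ m * (s ^ k * y) := by ring
  rw [← integral_sub hψk hφk, ← integral_sub hψkm hφkm]
  simp only [hpow, ← mul_sub] at hψkm hφkm ⊢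
  refine mul_setIntegral_Ioi_le_of_sign_change (g := (· ^ m)) hc
    (fun s hs hsc => mul_nonpos_of_nonneg_of_nonpos (pow_nonneg hs k) (hneg s hs hsc))
    (fun s hcs => mul_nonneg (pow_nonneg (hc.trans hcs.le) k) (hpos s hcs))
    (fun s hs t _ hst => pow_le_pow_left₀ hs hst m) ?_ ?_
  · simp only [mul_sub]
    exact hψk.sub hφk
  · simp only [mul_sub]
    exact hψkm.sub hφkm

theorem mul_sub_le_sub_of_eq_add_integral {f g : ℝ → ℝ} {l m s t : ℝ}
    (hg : ∀ x, l ≤ x → IntervalIntegrable g volume l x)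
    (hf : ∀ x, l ≤ x → f x = f l + ∫ u in l..x, g u)
    (hm : ∀ᵐ u, l ≤ u → m ≤ g u) (hs : l ≤ s) (hst : s ≤ t) :
    m * (t - s) ≤ f t - f s := by
  have ht : l ≤ t := hs.trans hst
  have hgst : IntervalIntegrable g volume s t := (hg s hs).symm.trans (hg t ht)
  calc m * (t - s) = ∫ _ in s..t, m := by
        rw [intervalIntegral.integral_const, smul_eq_mul, mul_comm]
    _ ≤ ∫ u in s..t, g u := by
        refine intervalIntegral.integral_mono_ae_restrict hst intervalIntegrable_const hgst ?_
        filter_upwards [ae_restrict_of_ae hm, ae_restrict_mem measurableSet_Icc] with u hu hmem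
        exact hu (hs.trans hmem.1)
    _ = f t - f s := by
        rw [hf s hs, hf t ht, add_sub_add_left_eq_sub,
          intervalIntegral.integral_interval_sub_left (hg t ht) (hg s hs)]

theorem intervalIntegrable_deriv_of_ae_mem_Icc {f : ℝ → ℝ} {l m M x : ℝ}
    (hf : ∀ᵐ u, l ≤ u → m ≤ deriv f u ∧ deriv f u ≤ M) (hx : l ≤ x) :
    IntervalIntegrable (deriv f) volume l x := by
  rw [intervalIntegrable_iff_integrableOn_Ioc_of_le hx]
  refine Measure.integrableOn_of_bounded measure_Ioc_lt_top.ne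
    (measurable_deriv f).aestronglyMeasurable (M := max |m| |M|) ?_
  filter_upwards [ae_restrict_of_ae hf, ae_restrict_mem measurableSet_Ioc] with u hu hmem
  obtain ⟨hmu, huM⟩ := hu hmem.1.le
  exact abs_le_max_abs_abs hmu huM

theorem monotoneOn_id_add_of_neg_one_le_deriv {f : ℝ → ℝ} {l M : ℝ}
    (hf : ∀ x, l ≤ x → f x = f l + ∫ u in l..x, deriv f u)
    (hf' : ∀ᵐ u, l ≤ u → -1 ≤ deriv f u ∧ deriv f u ≤ M) :
    MonotoneOn (fun x => x + f x) (Set.Ici l) := by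
  intro s hs t _ hst
  have := mul_sub_le_sub_of_eq_add_integral
    (fun x hx => intervalIntegrable_deriv_of_ae_mem_Icc hf' hx) hf
    (hf'.mono fun u hu hlu => (hu hlu).1) hs hst
  linarith

/-- The extremal profile: it is `1` up to `a`, decreases with slope `-1` on `[a, a + 1]` and
vanishes from `a + 1` on. Among the `[0, 1]`-valued functions `ψ` for which `s + ψ s` is monotone,
it has the smallest higher moments once a lower moment is prescribed. -/
noncomputable def ramp (a s : ℝ) : ℝ := max 0 (min 1 (a + 1 - s))

namespace ramp

variable {a s t : ℝ} {k : ℕ}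

theorem eq_one_of_le (h : s ≤ a) : ramp a s = 1 := by
  rw [ramp, min_eq_left (by linarith), max_eq_right zero_le_one]

theorem eq_zero_of_ge (h : a + 1 ≤ s) : ramp a s = 0 :=
  max_eq_left ((min_le_right _ _).trans (by linarith))

theorem eq_sub_of_mem_Icc (h : s ∈ Set.Icc a (a + 1)) : ramp a s = a + 1 - s := by
  rw [ramp, min_eq_right (by linarith [h.1]), max_eq_right (by linarith [h.2])]

theorem continuous_pow_mul (a : ℝ) (k : ℕ) : Continuous fun s => s ^ k * ramp a s := by
  unfold ramp
  fun_prop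

theorem pow_mul_eq_zero_of_mem_diff (h : s ∈ Set.Ioi 0 \ Set.Ioc 0 (a + 1)) :
    s ^ k * ramp a s = 0 := by
  have has : a + 1 ≤ s := le_of_not_ge fun hsa => h.2 ⟨h.1, hsa⟩
  rw [eq_zero_of_ge has, mul_zero]

theorem integrableOn_pow_mul (a : ℝ) (k : ℕ) :
    IntegrableOn (fun s => s ^ k * ramp a s) (Set.Ioi 0) :=
  (continuous_pow_mul a k).integrableOn_Ioc.of_forall_sdiff_eq_zero measurableSet_Ioi
    fun _ => pow_mul_eq_zero_of_mem_diff

theorem intervalIntegral_zero_self_pow_mul (ha : 0 ≤ a) (k : ℕ) :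
    ∫ s in (0 : ℝ)..a, s ^ k * ramp a s = a ^ (k + 1) / (k + 1) := by
  have : ∫ s in (0 : ℝ)..a, s ^ k * ramp a s = ∫ s in (0 : ℝ)..a, s ^ k := by
    refine intervalIntegral.integral_congr fun s hs => ?_
    rw [Set.uIcc_of_le ha] at hs
    simp only [eq_one_of_le hs.2, mul_one]
  rw [this, integral_pow, zero_pow k.succ_ne_zero, sub_zero]

theorem intervalIntegral_self_add_one_pow_mul (a : ℝ) (k : ℕ) :
    ∫ s in a..(a + 1), s ^ k * ramp a s
      = (a + 1) * (((a + 1) ^ (k + 1) - a ^ (k + 1)) / (k + 1))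
        - ((a + 1) ^ (k + 2) - a ^ (k + 2)) / (k + 2) := by
  have : ∫ s in a..(a + 1), s ^ k * ramp a s
      = ∫ s in a..(a + 1), ((a + 1) * s ^ k - s ^ (k + 1)) := by
    refine intervalIntegral.integral_congr fun s hs => ?_
    rw [Set.uIcc_of_le (by linarith)] at hs
    simp only [eq_sub_of_mem_Icc hs]
    ring
  rw [this, intervalIntegral.integral_sub
      (Continuous.intervalIntegrable (by fun_prop) _ _)
      (Continuous.intervalIntegrable (by fun_prop) _ _),
    intervalIntegral.integral_const_mul, integral_pow, integral_pow]
  push_cast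
  ring

theorem integral_Ioi_pow_mul (ha : 0 ≤ a) (k : ℕ) :
    ∫ s in Set.Ioi (0 : ℝ), s ^ k * ramp a s
      = ((a + 1) ^ (k + 2) - a ^ (k + 2)) / ((k + 1) * (k + 2)) := by
  have hint (u v : ℝ) : IntervalIntegrable (fun s => s ^ k * ramp a s) volume u v :=
    (continuous_pow_mul a k).intervalIntegrable u v
  calc ∫ s in Set.Ioi (0 : ℝ), s ^ k * ramp a s
      = ∫ s in Set.Ioc 0 (a + 1), s ^ k * ramp a s :=
        setIntegral_eq_of_subset_of_forall_sdiff_eq_zero measurableSet_Ioi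
          Set.Ioc_subset_Ioi_self fun _ => pow_mul_eq_zero_of_mem_diff
    _ = (∫ s in (0 : ℝ)..a, s ^ k * ramp a s) + ∫ s in a..(a + 1), s ^ k * ramp a s := by
        rw [intervalIntegral.integral_add_adjacent_intervals (hint _ _) (hint _ _),
          intervalIntegral.integral_of_le (by linarith)]
    _ = ((a + 1) ^ (k + 2) - a ^ (k + 2)) / ((k + 1) * (k + 2)) := by
        rw [intervalIntegral_zero_self_pow_mul ha, intervalIntegral_self_add_one_pow_mul]
        field_simp
        ring

variable {ψ : ℝ → ℝ}

theorem le_of_lt_of_add_le_add (hs : ψ s ≤ 1) (ht : 0 ≤ ψ t) (hst : s + ψ s ≤ t + ψ t)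
    (h : ramp a s < ψ s) : ramp a t ≤ ψ t := by
  have hmin : min 1 (a + 1 - s) < ψ s := (le_max_right _ _).trans_lt h
  have hslope : a + 1 - s < ψ s := (min_lt_iff.1 hmin).resolve_left hs.not_gt
  exact max_le ht ((min_le_right _ _).trans (by linarith))

theorem exists_sign_change_sub (a : ℝ) (hψ_nonneg : ∀ s, 0 ≤ s → 0 ≤ ψ s)
    (hψ_le_one : ∀ s, 0 ≤ s → ψ s ≤ 1) (hψ_mono : MonotoneOn (fun s => s + ψ s) (Set.Ici 0)) :
    ∃ c, 0 ≤ c ∧ (∀ s, 0 ≤ s → s < c → ψ s - ramp a s ≤ 0) ∧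
      ∀ s, c < s → 0 ≤ ψ s - ramp a s := by
  refine exists_sign_change (b := max 0 (a + 1)) (fun s t hs hst h => ?_) fun s hs => ?_
  · have ht : 0 ≤ t := hs.trans hst
    exact sub_nonneg.2 (le_of_lt_of_add_le_add (hψ_le_one s hs) (hψ_nonneg t ht)
      (hψ_mono hs ht hst) (sub_pos.1 h))
  · rw [eq_zero_of_ge ((le_max_right _ _).trans hs), sub_zero]
    exact hψ_nonneg s ((le_max_left _ _).trans hs)

theorem integral_Ioi_pow_add_mul_le (hψ_nonneg : ∀ s, 0 ≤ s → 0 ≤ ψ s)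
    (hψ_le_one : ∀ s, 0 ≤ s → ψ s ≤ 1) (hψ_mono : MonotoneOn (fun s => s + ψ s) (Set.Ici 0))
    {m : ℕ} (hk : IntegrableOn (fun s => s ^ k * ψ s) (Set.Ioi 0))
    (hkm : IntegrableOn (fun s => s ^ (k + m) * ψ s) (Set.Ioi 0))
    (h : ∫ s in Set.Ioi (0 : ℝ), s ^ k * ramp a s ≤ ∫ s in Set.Ioi (0 : ℝ), s ^ k * ψ s) :
    ∫ s in Set.Ioi (0 : ℝ), s ^ (k + m) * ramp a s
      ≤ ∫ s in Set.Ioi (0 : ℝ), s ^ (k + m) * ψ s := by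
  obtain ⟨c, hc, hneg, hpos⟩ := exists_sign_change_sub a hψ_nonneg hψ_le_one hψ_mono
  refine sub_nonneg.1 <| (mul_nonneg (pow_nonneg hc m) (sub_nonneg.2 h)).trans ?_
  exact pow_mul_sub_integral_le_of_sign_change hc hneg hpos hk (integrableOn_pow_mul a k) hkm
    (integrableOn_pow_mul a (k + m))

end ramp

theorem one_div_mul_rpow_add_two_div {ν x S : ℝ} (hν : 0 < ν) (hx : 0 ≤ x) (hS : S / (ν + 1) = x) :
    1 / ν * x ^ ((ν + 2) / ν) = x ^ (2 / ν) * S / (ν * (ν + 1)) := by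
  have hexp : x ^ ((ν + 2) / ν) = x * x ^ (2 / ν) := by
    rw [add_div, div_self hν.ne', Real.rpow_one_add' hx (by positivity)]
  rw [hexp, mul_div_mul_comm, hS]
  ring

theorem stmt3_general (n : ℕ) (ψ : ℝ → ℝ)
    (hψ_nonneg : ∀ s, 0 ≤ s → 0 ≤ ψ s)
    (hψ_le_one : ∀ s, 0 ≤ s → ψ s ≤ 1)
    (hψ_mono : MonotoneOn (fun s => s + ψ s) (Set.Ici 0))
    (A B : ℝ)
    (hA : A = ∫ s in Set.Ioi (0 : ℝ), s ^ (n - 1) * ψ s)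
    (hAint : IntegrableOn (fun s => s ^ (n - 1) * ψ s) (Set.Ioi 0))
    (hB : B = ∫ s in Set.Ioi (0 : ℝ), s ^ (n + 1) * ψ s)
    (hBint : IntegrableOn (fun s => s ^ (n + 1) * ψ s) (Set.Ioi 0))
    (a : ℝ) (ha : 0 ≤ a)
    (haA : ((a + 1) ^ (n + 1) - a ^ (n + 1)) / ((n : ℝ) + 1) = (n : ℝ) * A) :
    B ≥ (1 / (n : ℝ)) * ((n : ℝ) * A) ^ (((n : ℝ) + 2) / (n : ℝ))
        + ((a + 1) ^ (n + 3) - a ^ (n + 3)) / (((n : ℝ) + 2) * ((n : ℝ) + 3))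
        - ((n : ℝ) * A) ^ ((2 : ℝ) / (n : ℝ)) * ((a + 1) ^ (n + 1) - a ^ (n + 1))
            / ((n : ℝ) * ((n : ℝ) + 1)) := by
  obtain ⟨k, rfl⟩ : ∃ k, n = k + 1 := Nat.exists_eq_add_one_of_ne_zero <| by
    rintro rfl
    simp at haA
  have hA_nonneg : 0 ≤ A := hA ▸ setIntegral_nonneg measurableSet_Ioi fun s hs =>
    mul_nonneg (pow_nonneg (le_of_lt hs) _) (hψ_nonneg s (le_of_lt hs))
  have hmoment : ∫ s in Set.Ioi (0 : ℝ), s ^ k * ramp a s = A := by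
    rw [ramp.integral_Ioi_pow_mul ha]
    push_cast at haA
    field_simp at haA ⊢
    linear_combination haA
  have hle := ramp.integral_Ioi_pow_add_mul_le hψ_nonneg hψ_le_one hψ_mono (m := 2) hAint
    hBint (hmoment.trans hA).le
  rw [Nat.add_sub_cancel, ← hB, ramp.integral_Ioi_pow_mul ha] at hle
  rw [one_div_mul_rpow_add_two_div (by positivity) (by positivity) haA, add_sub_cancel_left]
  convert hle using 3 <;> push_cast <;> ring

/-- Lemma (Melas-type) for the Laplacian: lower bound for the second moment `B` of a
decreasing, absolutely continuous function `ψ` on `[0,∞)` with `ψ(0) = 1` and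
`-1 ≤ ψ' ≤ 0` almost everywhere.  Absolute continuity is encoded via the fundamental
theorem of calculus: `ψ t = ψ 0 + ∫_0^t ψ'`. -/
theorem stmt3 (n : ℕ) (hn : 2 ≤ n) (ψ : ℝ → ℝ)
    (hψ_nonneg : ∀ s, 0 ≤ s → 0 ≤ ψ s)
    (hψ_anti : AntitoneOn ψ (Set.Ici 0))
    (hψ0 : ψ 0 = 1)
    (hψ_ftc : ∀ t, 0 ≤ t → ψ t = ψ 0 + ∫ s in (0:ℝ)..t, deriv ψ s)
    (hψ_deriv : ∀ᵐ s ∂volume, 0 ≤ s → -1 ≤ deriv ψ s ∧ deriv ψ s ≤ 0)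
    (A B : ℝ)
    (hA : A = ∫ s in Set.Ioi (0:ℝ), s ^ (n - 1) * ψ s)
    (hAint : IntegrableOn (fun s => s ^ (n - 1) * ψ s) (Set.Ioi 0))
    (hB : B = ∫ s in Set.Ioi (0:ℝ), s ^ (n + 1) * ψ s)
    (hBint : IntegrableOn (fun s => s ^ (n + 1) * ψ s) (Set.Ioi 0))
    (a : ℝ) (ha : 0 ≤ a)
    (haA : ((a + 1) ^ (n + 1) - a ^ (n + 1)) / ((n : ℝ) + 1) = (n : ℝ) * A) :
    B ≥ (1 / (n : ℝ)) * ((n : ℝ) * A) ^ (((n : ℝ) + 2) / (n : ℝ))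
        + ((a + 1) ^ (n + 3) - a ^ (n + 3)) / (((n : ℝ) + 2) * ((n : ℝ) + 3))
        - ((n : ℝ) * A) ^ ((2 : ℝ) / (n : ℝ)) * ((a + 1) ^ (n + 1) - a ^ (n + 1))
            / ((n : ℝ) * ((n : ℝ) + 1)) :=
  stmt3_general n ψ hψ_nonneg (fun _ hs => hψ0 ▸ hψ_anti Set.self_mem_Ici hs hs)
    (monotoneOn_id_add_of_neg_one_le_deriv hψ_ftc hψ_deriv) A B hA hAint hB hBint a ha haA
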